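/- The subalgebra 𝒜 of W coincides with the set of elements a = Σ_i w^i f_i of W such that each f_i has only simple poles, located only possibly at ±q^j (j ∈ ℤ), and the residues f_i^{(j,±)} satisfy: (1) f_{−i}(v⁻¹) = (−1)^i f_i(v); (2) f_i^{(i,±)} = 0; (3) for every positive integer k, f_{i+k}^{(i,±)} = (−1)^{k+1} f_{i−k}^{(i,±)} (same sign ± on both sides). In particular f_0^{(0,±)} = 0, so f_0 has no poles on the unit circle. -/

import Mathlib

noncomputable section

open Polynomial

/-- The punctured domain `ℂ^× ∖ (q^ℤ ∪ −q^ℤ)`, on which the localized q-Weyl algebra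
`W` acts faithfully by q-difference operators. -/
def Dom (q : ℝ) : Type := {z : ℂ // z ≠ 0 ∧ ∀ j : ℤ, z ≠ (q : ℂ) ^ j ∧ z ≠ -(q : ℂ) ^ j}

/-- The operator of multiplication by a rational function of `v`. -/
def mulOp (q : ℝ) (f : RatFunc ℂ) : Module.End ℂ (Dom q → ℂ) where
  toFun g := fun z => f.eval (RingHom.id ℂ) z.1 * g z
  map_add' g h := by funext z; exact mul_add _ (g z) (h z)
  map_smul' c g := by funext z; dsimp; ring

/-- The point `q^k z` of the domain. -/
def shiftMem {q : ℝ} (hq : 0 < q) (k : ℤ) (z : Dom q) : Dom q :=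
  ⟨(q : ℂ) ^ k * z.1, by
    have hq0 : (q : ℂ) ≠ 0 := by exact_mod_cast hq.ne'
    obtain ⟨h0, hz⟩ := z.2
    refine ⟨mul_ne_zero (zpow_ne_zero _ hq0) h0, fun j => ⟨?_, ?_⟩⟩
    · intro hEq
      refine (hz (j - k)).1 ?_
      rw [zpow_sub₀ hq0, eq_div_iff (zpow_ne_zero _ hq0), mul_comm]
      exact hEq
    · intro hEq
      refine (hz (j - k)).2 ?_
      rw [zpow_sub₀ hq0, ← neg_div, eq_div_iff (zpow_ne_zero _ hq0), mul_comm]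
      exact hEq⟩

/-- The operator `w^k`: `(w^k g)(z) = g(q^k z)`. -/
def shiftOp {q : ℝ} (hq : 0 < q) (k : ℤ) : Module.End ℂ (Dom q → ℂ) where
  toFun g := fun z => g (shiftMem hq k z)
  map_add' g h := rfl
  map_smul' c g := rfl

/-- `u₊ = w (v − v⁻¹)⁻¹`. -/
def uPlus {q : ℝ} (hq : 0 < q) : Module.End ℂ (Dom q → ℂ) :=
  shiftOp hq 1 * mulOp q (RatFunc.X - RatFunc.X⁻¹)⁻¹

/-- `u₋ = w⁻¹ (v − v⁻¹)⁻¹`. -/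
def uMinus {q : ℝ} (hq : 0 < q) : Module.End ℂ (Dom q → ℂ) :=
  shiftOp hq (-1) * mulOp q (RatFunc.X - RatFunc.X⁻¹)⁻¹

/-- `H_a = q^{a/2}(v^a u₊ + v^{−a} u₋)`. -/
def Hgen {q : ℝ} (hq : 0 < q) (a : ℤ) : Module.End ℂ (Dom q → ℂ) :=
  ((Real.sqrt q : ℂ)) ^ a •
    (mulOp q (RatFunc.X ^ a) * uPlus hq + mulOp q (RatFunc.X ^ (-a)) * uMinus hq)

/-- The algebra `𝒜 ⊂ W` generated by `v^k + v^{−k}` and `v^k u₊ + v^{−k} u₋`, `k ∈ ℤ`. -/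
def Acal {q : ℝ} (hq : 0 < q) : Subalgebra ℂ (Module.End ℂ (Dom q → ℂ)) :=
  Algebra.adjoin ℂ
    ((Set.range fun k : ℤ => mulOp q (RatFunc.X ^ k + RatFunc.X ^ (-k))) ∪
     (Set.range fun k : ℤ =>
       mulOp q (RatFunc.X ^ k) * uPlus hq + mulOp q (RatFunc.X ^ (-k)) * uMinus hq))

/-- The element `Σ_i w^i f_i` of `W`. -/
def wform {q : ℝ} (hq : 0 < q) (F : ℤ →₀ RatFunc ℂ) : Module.End ℂ (Dom q → ℂ) :=
  F.sum fun i f => shiftOp hq i * mulOp q f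

/-- The set of all elements of the form `Σ_i w^i f_i` (the crossed product containing `W`). -/
def WSet {q : ℝ} (hq : 0 < q) : Set (Module.End ℂ (Dom q → ℂ)) := Set.range (wform hq)

/-- The residue of a rational function with at most a simple pole at `z₀`
(arbitrary at non-poles, `0` when `z₀` is not a pole). -/
def residueAt (f : RatFunc ℂ) (z₀ : ℂ) : ℂ :=
  if f.denom.eval z₀ = 0 then f.num.eval z₀ / (Polynomial.derivative f.denom).eval z₀ else 0

/-- `f` has only simple poles, located only possibly at `±q^j`, `j ∈ ℤ`
(poles at `0` and `∞` are unrestricted: `f` is a rational function of `v, v⁻¹`). -/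
def OkPoles (q : ℝ) (f : RatFunc ℂ) : Prop :=
  ∀ z₀ : ℂ, z₀ ≠ 0 → f.denom.eval z₀ = 0 →
    f.denom.rootMultiplicity z₀ = 1 ∧ ∃ j : ℤ, z₀ = (q : ℂ) ^ j ∨ z₀ = -(q : ℂ) ^ j

/-!
Poles of `fᵢ` at `±q ^ j` are described by units `z` with `z ^ 2 = q ^ (2 j)`. Multiplying
`∑ wⁿ fₙ` on the left by `v ^ a u₊ + v ^ (-a) u₋` turns each coefficient into a combination of its
two neighbours. At `z = ±q ^ i` the contributions of `f_{i+m}` and `f_{i-m}` have residues differing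
by the factor `(-1) ^ m`, so the symmetry and residue conditions are preserved, and every element of
`𝒜` satisfies them.

Conversely, if the conditions hold and `n` is the largest index with `fₙ ≠ 0`, symmetry kills the
coefficients below `-n`, and the residue conditions pair a pole of `fₙ` at `±q ^ j` with a residue
of `f_{2j-n}`. Hence `fₙ` has poles only at `±q ^ j` with `0 ≤ j < n`, and `fₙ` times
`∏_{0 ≤ j < n} (q ^ (-j) v - q ^ j v⁻¹)` is a Laurent polynomial. For `n > 0`, products of `n`
generators realise all such top coefficients, so subtracting an element of `𝒜` lowers `n`; for
`n = 0` only the symmetric Laurent polynomial `f₀` remains.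
-/

section Values

variable {K : Type*} [Field K] {f g : RatFunc K} {z a b r s : K}

theorem ratFuncX_sub_C_ne_zero (z : K) : (RatFunc.X - RatFunc.C z : RatFunc K) ≠ 0 := by
  simpa using RatFunc.algebraMap_ne_zero (X_sub_C_ne_zero z)

/-- `f` is regular at `z` and takes the value `a` there; unlike `RatFunc.eval` on its own, this
rules out the junk value `0` at a pole. -/
structure HasValueAt (f : RatFunc K) (z a : K) : Prop where
  denom_ne_zero : f.denom.eval z ≠ 0
  eval_eq : f.eval (RingHom.id K) z = a

/-- The algebra of rational functions regular at `z`. -/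
def regularAt (z : K) : Subalgebra K (RatFunc K) where
  carrier := {f | f.denom.eval z ≠ 0}
  add_mem' {f g} hf hg h :=
    mul_ne_zero hf hg (by
      rw [← eval_mul]; exact eval_eq_zero_of_dvd_of_eval_eq_zero (RatFunc.denom_add_dvd f g) h)
  mul_mem' {f g} hf hg h :=
    mul_ne_zero hf hg (by
      rw [← eval_mul]; exact eval_eq_zero_of_dvd_of_eval_eq_zero (RatFunc.denom_mul_dvd f g) h)
  algebraMap_mem' c := by simp [RatFunc.algebraMap_eq_C]

theorem HasValueAt.mem_regularAt (hf : HasValueAt f z a) : f ∈ regularAt z := hf.denom_ne_zero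

theorem mem_regularAt_iff_exists_hasValueAt : f ∈ regularAt z ↔ ∃ a, HasValueAt f z a :=
  ⟨fun hf => ⟨_, hf, rfl⟩, fun ⟨_, hf⟩ => hf.mem_regularAt⟩

namespace HasValueAt

theorem unique (ha : HasValueAt f z a) (hb : HasValueAt f z b) : a = b :=
  ha.eval_eq.symm.trans hb.eval_eq

theorem add (hf : HasValueAt f z a) (hg : HasValueAt g z b) : HasValueAt (f + g) z (a + b) :=
  ⟨add_mem hf.mem_regularAt hg.mem_regularAt, by
    rw [RatFunc.eval_add (RingHom.id K) z hf.denom_ne_zero hg.denom_ne_zero, hf.eval_eq,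
      hg.eval_eq]⟩

theorem mul (hf : HasValueAt f z a) (hg : HasValueAt g z b) : HasValueAt (f * g) z (a * b) :=
  ⟨mul_mem hf.mem_regularAt hg.mem_regularAt, by
    rw [RatFunc.eval_mul (RingHom.id K) z hf.denom_ne_zero hg.denom_ne_zero, hf.eval_eq,
      hg.eval_eq]⟩

protected theorem algebraMap (p : K[X]) (z : K) :
    HasValueAt (algebraMap K[X] (RatFunc K) p) z (p.eval z) :=
  ⟨by simp, by simp [RatFunc.eval]⟩

protected theorem C (c z : K) : HasValueAt (RatFunc.C c) z c := by
  simpa using HasValueAt.algebraMap (Polynomial.C c) z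

protected theorem X (z : K) : HasValueAt RatFunc.X z z := by
  simpa using HasValueAt.algebraMap Polynomial.X z

theorem neg (hf : HasValueAt f z a) : HasValueAt (-f) z (-a) := by
  simpa using (HasValueAt.C (-1) z).mul hf

theorem sub (hf : HasValueAt f z a) (hg : HasValueAt g z b) : HasValueAt (f - g) z (a - b) := by
  simpa only [sub_eq_add_neg] using hf.add hg.neg

theorem inv (hf : HasValueAt f z a) (ha : a ≠ 0) : HasValueAt f⁻¹ z a⁻¹ := by
  have hdiv : f.num.eval z / f.denom.eval z = a := hf.eval_eq
  have hnum : f.num.eval z ≠ 0 := fun h => ha (by rw [← hdiv, h, zero_div])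
  have hf0 : f ≠ 0 := by rintro rfl; simp at hnum
  have hreg : f⁻¹ ∈ regularAt z := fun h =>
    hnum (eval_eq_zero_of_dvd_of_eval_eq_zero (RatFunc.denom_inv_dvd hf0) h)
  refine ⟨hreg, eq_inv_of_mul_eq_one_right ?_⟩
  have hone := RatFunc.eval_mul (RingHom.id K) z hf.denom_ne_zero hreg
  rwa [mul_inv_cancel₀ hf0, RatFunc.eval_one, hf.eval_eq, eq_comm] at hone

theorem div (hf : HasValueAt f z a) (hg : HasValueAt g z b) (hb : b ≠ 0) :
    HasValueAt (f / g) z (a / b) := by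
  simpa only [div_eq_mul_inv] using hf.mul (hg.inv hb)

theorem pow (hf : HasValueAt f z a) (n : ℕ) : HasValueAt (f ^ n) z (a ^ n) := by
  induction n with
  | zero => simpa using HasValueAt.C 1 z
  | succ n ih => simpa only [pow_succ] using ih.mul hf

theorem zpow (hf : HasValueAt f z a) (ha : a ≠ 0) (n : ℤ) : HasValueAt (f ^ n) z (a ^ n) := by
  cases n with
  | ofNat n => simpa using hf.pow n
  | negSucc n => simpa only [zpow_negSucc] using (hf.pow (n + 1)).inv (pow_ne_zero _ ha)

theorem div_X_sub_C_mem_regularAt (hf : HasValueAt f z 0) :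
    f / (RatFunc.X - RatFunc.C z) ∈ regularAt z := by
  have hdiv : f.num.eval z / f.denom.eval z = 0 := hf.eval_eq
  obtain ⟨p, hp⟩ := dvd_iff_isRoot.2 ((div_eq_zero_iff.1 hdiv).resolve_right hf.denom_ne_zero)
  have hfp : f / (RatFunc.X - RatFunc.C z) = algebraMap K[X] (RatFunc K) p /
      algebraMap K[X] (RatFunc K) f.denom := by
    nth_rewrite 1 [← RatFunc.num_div_denom f]
    rw [hp, map_mul, map_sub, RatFunc.algebraMap_X, RatFunc.algebraMap_C, mul_div_assoc,
      mul_div_cancel_left₀ _ (ratFuncX_sub_C_ne_zero z)]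
  rw [hfp]
  exact fun h => hf.denom_ne_zero
    (eval_eq_zero_of_dvd_of_eval_eq_zero (RatFunc.denom_div_dvd _ _) h)

end HasValueAt

theorem eq_of_infinite_hasValueAt (S : Set K) (hS : S.Infinite)
    (h : ∀ z ∈ S, ∃ a, HasValueAt f z a ∧ HasValueAt g z a) : f = g := by
  have hroot : ∀ z ∈ S, (f - g).num.IsRoot z := fun z hz => by
    obtain ⟨a, hf, hg⟩ := h z hz
    have hsub := hf.sub hg
    have hdiv : (f - g).num.eval z / (f - g).denom.eval z = a - a := hsub.eval_eq
    rw [sub_self] at hdiv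
    exact (div_eq_zero_iff.1 hdiv).resolve_right hsub.denom_ne_zero
  have hnum : (f - g).num = 0 := eq_zero_of_infinite_isRoot _ (hS.mono hroot)
  exact sub_eq_zero.1 (RatFunc.num_eq_zero_iff.1 hnum)

/-- `f` has at most a simple pole at `z`, with residue `r`. -/
def HasResidueAt (f : RatFunc K) (z r : K) : Prop :=
  HasValueAt ((RatFunc.X - RatFunc.C z) * f) z r

theorem HasValueAt.hasResidueAt_zero (hf : HasValueAt f z a) : HasResidueAt f z 0 := by
  simpa [HasResidueAt] using ((HasValueAt.X z).sub (HasValueAt.C z z)).mul hf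

namespace HasResidueAt

theorem unique (hr : HasResidueAt f z r) (hs : HasResidueAt f z s) : r = s :=
  HasValueAt.unique hr hs

theorem add (hf : HasResidueAt f z r) (hg : HasResidueAt g z s) :
    HasResidueAt (f + g) z (r + s) := by
  simpa only [HasResidueAt, mul_add] using HasValueAt.add hf hg

theorem mul_left (hf : HasValueAt f z a) (hg : HasResidueAt g z r) :
    HasResidueAt (f * g) z (a * r) := by
  simpa only [HasResidueAt, mul_left_comm] using hf.mul hg

theorem mul_right (hf : HasResidueAt f z r) (hg : HasValueAt g z a) :
    HasResidueAt (f * g) z (r * a) := by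
  rw [mul_comm f, mul_comm r]; exact mul_left hg hf

theorem mul_mem_regularAt (hf : HasResidueAt f z r) (hg : HasValueAt g z 0) :
    f * g ∈ regularAt z := by
  have := mul_mem hf.mem_regularAt hg.div_X_sub_C_mem_regularAt
  rwa [mul_div_assoc', mul_assoc, mul_div_cancel_left₀ _ (ratFuncX_sub_C_ne_zero z)] at this

theorem mem_regularAt (hf : HasResidueAt f z 0) : f ∈ regularAt z := by
  simpa only [mul_div_cancel_left₀ _ (ratFuncX_sub_C_ne_zero z)] using
    HasValueAt.div_X_sub_C_mem_regularAt hf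

end HasResidueAt

theorem mem_span_range_X_zpow [IsAlgClosed K] (hf : ∀ z : K, z ≠ 0 → f ∈ regularAt z) :
    f ∈ Submodule.span K (Set.range fun n : ℤ => (RatFunc.X : RatFunc K) ^ n) := by
  have hroots : f.denom.roots = Multiset.replicate f.denom.roots.card 0 :=
    Multiset.eq_replicate_card.2 fun z hz => by
      by_contra hz0
      exact hf z hz0 (isRoot_of_mem_roots hz)
  have hdenom : f.denom = X ^ f.denom.roots.card := by
    have := (IsAlgClosed.splits f.denom).eq_prod_roots
    rw [(RatFunc.monic_denom f).leadingCoeff, hroots] at this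
    simpa using this
  have hnum (p : K[X]) (n : ℤ) : algebraMap K[X] (RatFunc K) p * RatFunc.X ^ n ∈
      Submodule.span K (Set.range fun n : ℤ => (RatFunc.X : RatFunc K) ^ n) := by
    induction p using Polynomial.induction_on' with
    | add p₁ p₂ h₁ h₂ => rw [map_add, add_mul]; exact add_mem h₁ h₂
    | monomial m c =>
      rw [RatFunc.algebraMap_monomial, mul_assoc, ← zpow_natCast,
        ← zpow_add₀ RatFunc.X_ne_zero, ← RatFunc.smul_eq_C_mul]
      exact Submodule.smul_mem _ _ (Submodule.subset_span ⟨_, rfl⟩)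
  rw [← RatFunc.num_div_denom f, hdenom, map_pow, RatFunc.algebraMap_X, div_eq_mul_inv,
    ← zpow_natCast, ← zpow_neg]
  exact hnum _ _

end Values

section Substitution

variable {K : Type*} [Field K] {f x : RatFunc K} {z a b r : K}

/-- The substitution `f(v) ↦ f(x)` for a non-constant rational function `x`. -/
def substX (x : RatFunc K) (hx : Transcendental K x) : RatFunc K →ₐ[K] RatFunc K :=
  RatFunc.liftAlgHom (aeval x)
    (nonZeroDivisors_le_comap_nonZeroDivisors_of_injective _ (transcendental_iff_injective.1 hx))

theorem substX_eq_div (hx : Transcendental K x) (f : RatFunc K) :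
    substX x hx f = aeval x f.num / aeval x f.denom :=
  RatFunc.liftAlgHom_apply _ _ f

theorem substX_X (hx : Transcendental K x) : substX x hx RatFunc.X = x := by
  simp [substX_eq_div]

theorem algHom_eq_of_apply_X_eq {φ ψ : RatFunc K →ₐ[K] RatFunc K}
    (h : φ RatFunc.X = ψ RatFunc.X) : φ = ψ :=
  IsLocalization.algHom_ext (nonZeroDivisors K[X]) <| Polynomial.algHom_ext <| by
    change φ (algebraMap K[X] _ X) = ψ (algebraMap K[X] _ X)
    rwa [RatFunc.algebraMap_X]

theorem HasValueAt.aeval (hx : HasValueAt x z a) (p : K[X]) :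
    HasValueAt (aeval x p) z (p.eval a) := by
  induction p using Polynomial.induction_on' with
  | add p₁ p₂ h₁ h₂ => rw [map_add, eval_add]; exact h₁.add h₂
  | monomial n c =>
    rw [aeval_monomial, eval_monomial, RatFunc.algebraMap_eq_C]
    exact (HasValueAt.C c z).mul (hx.pow n)

theorem HasValueAt.substX {hx : Transcendental K x} (hxa : HasValueAt x z a)
    (hf : HasValueAt f a b) : HasValueAt (substX x hx f) z b := by
  rw [substX_eq_div, ← hf.eval_eq]
  exact (hxa.aeval f.num).div (hxa.aeval f.denom) hf.denom_ne_zero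

/-- The substitution `v ↦ v⁻¹`. -/
def invX : RatFunc K →ₐ[K] RatFunc K :=
  substX RatFunc.X⁻¹ fun h => RatFunc.transcendental_X (by simpa using h.inv)

theorem invX_X : invX (RatFunc.X : RatFunc K) = RatFunc.X⁻¹ := substX_X _

theorem HasValueAt.invX (hz : z ≠ 0) (hf : HasValueAt f z⁻¹ a) : HasValueAt (invX f) z a :=
  ((HasValueAt.X z).inv hz).substX hf

/-- The substitution `v ↦ cv`. -/
def scaleX (c : Kˣ) : RatFunc K →ₐ[K] RatFunc K :=
  substX (RatFunc.C (c : K) * RatFunc.X) fun h => RatFunc.transcendental_X <| by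
    simpa [← mul_assoc, ← map_mul] using (isAlgebraic_algebraMap (↑c⁻¹ : K)).mul h

theorem scaleX_X (c : Kˣ) : scaleX c (RatFunc.X : RatFunc K) = RatFunc.C (c : K) * RatFunc.X :=
  substX_X _

theorem scaleX_C (c : Kˣ) (a : K) : scaleX c (RatFunc.C a) = RatFunc.C a :=
  (scaleX c).commutes a

theorem invX_scaleX (c : Kˣ) (f : RatFunc K) : invX (scaleX c f) = scaleX c⁻¹ (invX f) := by
  have : invX.comp (scaleX c) = (scaleX c⁻¹).comp invX := algHom_eq_of_apply_X_eq <| by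
    have : invX (RatFunc.C (c : K)) = RatFunc.C (c : K) := invX.commutes _
    simp [invX_X, scaleX_X, this, mul_comm]
  exact DFunLike.congr_fun this f

theorem HasValueAt.scaleX {c z : Kˣ} (hf : HasValueAt f ((c * z : Kˣ) : K) a) :
    HasValueAt (scaleX c f) (z : K) a := by
  have hX := (HasValueAt.C (c : K) (z : K)).mul (HasValueAt.X (z : K))
  rw [← Units.val_mul] at hX
  exact hX.substX hf

theorem HasResidueAt.scaleX {c z : Kˣ} (hf : HasResidueAt f ((c * z : Kˣ) : K) r) :
    HasResidueAt (scaleX c f) (z : K) (((c⁻¹ : Kˣ) : K) * r) := by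
  have h := (HasValueAt.C ((c⁻¹ : Kˣ) : K) (z : K)).mul (HasValueAt.scaleX hf)
  rw [map_mul, map_sub, scaleX_X, scaleX_C, Units.val_mul, RatFunc.C.map_mul, ← mul_sub,
    mul_assoc, ← mul_assoc, ← map_mul, Units.inv_mul, map_one, one_mul] at h
  exact h

end Substitution

section WeylFamilies

variable {K : Type*} [Field K] {q : Kˣ} {f φ : RatFunc K} {F G : ℤ →₀ RatFunc K}

/-- The coefficient algebra of the localized `q`-Weyl algebra: the rational functions whose
nonzero poles `z` satisfy `z ^ 2 = q ^ (2 * j)` for some `j`, i.e. `z = ±q ^ j`. -/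
def coeffAlgebra (q : Kˣ) : Subalgebra K (RatFunc K) :=
  ⨅ z ∈ {z : Kˣ | ∀ j : ℤ, z ^ 2 ≠ q ^ (2 * j)}, regularAt (z : K)

theorem mem_coeffAlgebra_iff :
    f ∈ coeffAlgebra q ↔ ∀ z : Kˣ, (∀ j : ℤ, z ^ 2 ≠ q ^ (2 * j)) → f ∈ regularAt (z : K) := by
  simp [coeffAlgebra, Algebra.mem_iInf]

theorem scaleX_zpow_mem_coeffAlgebra (hf : f ∈ coeffAlgebra q) (n : ℤ) :
    scaleX (q ^ n) f ∈ coeffAlgebra q := by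
  rw [mem_coeffAlgebra_iff] at hf ⊢
  intro z hz
  have hshift : ∀ j : ℤ, (q ^ n * z) ^ 2 ≠ q ^ (2 * j) := fun j hj => hz (j - n) <| by
    rw [mul_sub, zpow_sub, ← hj, mul_pow, ← zpow_natCast (q ^ n), ← zpow_mul]
    simp [mul_comm n]
  obtain ⟨a, ha⟩ := mem_regularAt_iff_exists_hasValueAt.1 (hf _ hshift)
  exact (HasValueAt.scaleX (by simpa using ha)).mem_regularAt

theorem X_zpow_mem_coeffAlgebra (n : ℤ) : RatFunc.X ^ n ∈ coeffAlgebra q :=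
  mem_coeffAlgebra_iff.2 fun z _ => ((HasValueAt.X (z : K)).zpow z.ne_zero n).mem_regularAt

/-- Left multiplication by `w ^ e φ` on finite sums `∑ wⁿ fₙ`, encoded by the families of their
coefficients; it uses `φ(v) wⁿ = wⁿ φ(q⁻ⁿ v)`. -/
def weylMul (q : Kˣ) (e : ℤ) (φ : RatFunc K) : (ℤ →₀ RatFunc K) →ₗ[K] ℤ →₀ RatFunc K :=
  Finsupp.lsum K fun n => Finsupp.lsingle (n + e) ∘ₗ LinearMap.mulLeft K (scaleX (q ^ (-n)) φ)

theorem weylMul_single (e : ℤ) (φ : RatFunc K) (n : ℤ) (f : RatFunc K) :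
    weylMul q e φ (Finsupp.single n f) = Finsupp.single (n + e) (scaleX (q ^ (-n)) φ * f) := by
  simp [weylMul]

theorem weylMul_apply (e : ℤ) (φ : RatFunc K) (F : ℤ →₀ RatFunc K) (n : ℤ) :
    weylMul q e φ F n = scaleX (q ^ (-(n - e))) φ * F (n - e) := by
  induction F using Finsupp.induction_linear with
  | zero => simp
  | add F G hF hG => rw [map_add, Finsupp.add_apply, hF, hG, Finsupp.add_apply, mul_add]
  | single m f =>
    rw [weylMul_single]
    obtain rfl | hne := eq_or_ne n (m + e)
    · simp
    · rw [Finsupp.single_eq_of_ne hne, Finsupp.single_eq_of_ne (by lia), mul_zero]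

theorem weylMul_apply_mem_coeffAlgebra (hφ : φ ∈ coeffAlgebra q)
    (hF : ∀ n, F n ∈ coeffAlgebra q) (e n : ℤ) : weylMul q e φ F n ∈ coeffAlgebra q := by
  rw [weylMul_apply]
  exact mul_mem (scaleX_zpow_mem_coeffAlgebra hφ _) (hF _)

theorem invX_weylMul_apply_neg (hF : ∀ n, invX (F (-n)) = (-1) ^ n * F n) (e : ℤ)
    (φ : RatFunc K) (n : ℤ) :
    invX (weylMul q e φ F (-n)) = (-1) ^ n * weylMul q (-e) ((-1) ^ e * invX φ) F n := by
  have hsign : scaleX (q ^ (-(n + e))) ((-1 : RatFunc K) ^ e) = (-1) ^ e := by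
    rw [map_zpow₀, map_neg, map_one]
  rw [weylMul_apply, weylMul_apply, map_mul, invX_scaleX, sub_neg_eq_add, map_mul, hsign,
    show -n - e = -(n + e) by ring, hF, zpow_add₀ (by simp), neg_neg, zpow_neg]
  ring

/-- The coefficient `v ^ a (v - v⁻¹)⁻¹` of the generators of `𝒜`. -/
def uCoeff (K : Type*) [Field K] (a : ℤ) : RatFunc K :=
  RatFunc.X ^ a * (RatFunc.X - RatFunc.X⁻¹)⁻¹

theorem invX_uCoeff (a : ℤ) : invX (uCoeff K a) = -uCoeff K (-a) := by
  rw [uCoeff, uCoeff, map_mul, map_zpow₀, map_inv₀, map_sub, map_inv₀, invX_X, inv_inv,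
    ← neg_sub RatFunc.X, inv_neg, inv_zpow', mul_neg]

theorem sub_inv_ne_zero {x : Kˣ} (hx : x ^ 2 ≠ 1) : (x - (x : K)⁻¹ : K) ≠ 0 := fun h =>
  hx <| by
    rw [sub_eq_zero, ← Units.val_inv_eq_inv_val, Units.val_inj] at h
    rw [pow_two]
    exact mul_eq_one_iff_eq_inv.2 h

theorem hasValueAt_uCoeff (a : ℤ) {x : Kˣ} (hx : x ^ 2 ≠ 1) :
    HasValueAt (uCoeff K a) x (x ^ a * (x - (x : K)⁻¹)⁻¹) := by
  have hX := HasValueAt.X (x : K)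
  exact (hX.zpow x.ne_zero a).mul ((hX.sub (hX.inv x.ne_zero)).inv (sub_inv_ne_zero hx))

theorem X_sub_C_mul_uCoeff (a : ℤ) {x : K} (hx : x ^ 2 = 1) :
    (RatFunc.X - RatFunc.C x) * uCoeff K a = RatFunc.X ^ (a + 1) * (RatFunc.X + RatFunc.C x)⁻¹ := by
  have hX : (RatFunc.X : RatFunc K) ≠ 0 := RatFunc.X_ne_zero
  have hsub := ratFuncX_sub_C_ne_zero x
  have hfactor : (RatFunc.X - RatFunc.X⁻¹ : RatFunc K) =
      (RatFunc.X - RatFunc.C x) * (RatFunc.X + RatFunc.C x) * RatFunc.X⁻¹ := by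
    have hC : RatFunc.C x ^ 2 = 1 := by rw [← map_pow, hx, map_one]
    field_simp
    linear_combination hC
  rw [uCoeff, hfactor, zpow_add_one₀ hX, mul_inv, mul_inv, inv_inv]
  field_simp

theorem hasResidueAt_uCoeff [NeZero (2 : K)] (a : ℤ) {x : Kˣ} (hx : x ^ 2 = 1) :
    HasResidueAt (uCoeff K a) x ((x : K) ^ a / 2) := by
  have hX := HasValueAt.X (x : K)
  have hx0 : (x + x : K) ≠ 0 := by
    rw [← two_mul]; exact mul_ne_zero two_ne_zero x.ne_zero
  have hval := (hX.zpow x.ne_zero (a + 1)).mul ((hX.add (HasValueAt.C (x : K) x)).inv hx0)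
  have hdiv : (x : K) ^ (a + 1) * (x + x : K)⁻¹ = (x : K) ^ a / 2 := by
    rw [zpow_add_one₀ x.ne_zero, ← two_mul, mul_inv, ← div_eq_mul_inv]
    field_simp [x.ne_zero]
  rwa [hdiv, ← X_sub_C_mul_uCoeff a (by simpa using congrArg Units.val hx)] at hval

end WeylFamilies

section Admissible

variable {K : Type*} [Field K] {q : Kˣ} {F G : ℤ →₀ RatFunc K}

/-- The families `(fₙ)` satisfying the symmetry and residue conditions that characterise `𝒜`. In
terms of points `z = ±q ^ i`, the last field reads `f_{i+k} = (-1) ^ (k+1) f_{i-k}` for the residues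
at `z`; for `k = 0` it says that the residue of `fᵢ` is its own negative. -/
structure IsAdmissible (q : Kˣ) (F : ℤ →₀ RatFunc K) : Prop where
  apply_mem_coeffAlgebra : ∀ n, F n ∈ coeffAlgebra q
  invX_apply_neg : ∀ n, invX (F (-n)) = (-1) ^ n * F n
  exists_hasResidueAt : ∀ (z : Kˣ) (i k : ℤ), z ^ 2 = q ^ (2 * i) →
    ∃ r, HasResidueAt (F (i - k)) z r ∧ HasResidueAt (F (i + k)) z ((-1) ^ (k + 1) * r)

namespace IsAdmissible

theorem add (hF : IsAdmissible q F) (hG : IsAdmissible q G) : IsAdmissible q (F + G) where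
  apply_mem_coeffAlgebra n := add_mem (hF.apply_mem_coeffAlgebra n) (hG.apply_mem_coeffAlgebra n)
  invX_apply_neg n := by
    rw [Finsupp.add_apply, map_add, hF.invX_apply_neg, hG.invX_apply_neg, Finsupp.add_apply,
      mul_add]
  exists_hasResidueAt z i k hz := by
    obtain ⟨r, hr, hr'⟩ := hF.exists_hasResidueAt z i k hz
    obtain ⟨s, hs, hs'⟩ := hG.exists_hasResidueAt z i k hz
    exact ⟨r + s, hr.add hs, by rw [mul_add]; exact hr'.add hs'⟩

theorem smul (c : K) (hF : IsAdmissible q F) : IsAdmissible q (c • F) where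
  apply_mem_coeffAlgebra n := Subalgebra.smul_mem _ (hF.apply_mem_coeffAlgebra n) c
  invX_apply_neg n := by
    rw [Finsupp.smul_apply, map_smul, hF.invX_apply_neg, Finsupp.smul_apply, mul_smul_comm]
  exists_hasResidueAt z i k hz := by
    obtain ⟨r, hr, hr'⟩ := hF.exists_hasResidueAt z i k hz
    have hc := HasValueAt.C c (z : K)
    refine ⟨c * r, ?_, ?_⟩
    · simpa only [Finsupp.smul_apply, RatFunc.smul_eq_C_mul] using HasResidueAt.mul_left hc hr
    · simpa only [Finsupp.smul_apply, RatFunc.smul_eq_C_mul, mul_left_comm c] using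
        HasResidueAt.mul_left hc hr'

theorem single_zero_one : IsAdmissible q (Finsupp.single 0 1) where
  apply_mem_coeffAlgebra n := by
    rw [Finsupp.single_apply]
    split_ifs
    exacts [one_mem _, zero_mem _]
  invX_apply_neg n := by
    obtain rfl | hn := eq_or_ne n 0
    · simp
    · simp [hn]
  exists_hasResidueAt z i k _ := by
    have hres (n : ℤ) : HasResidueAt (Finsupp.single 0 1 n : RatFunc K) z 0 := by
      refine HasValueAt.hasResidueAt_zero (a := if 0 = n then 1 else 0) ?_
      rw [Finsupp.single_apply]
      split_ifs
      · simpa using HasValueAt.C 1 (z : K)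
      · simpa using HasValueAt.C 0 (z : K)
    exact ⟨0, hres _, by rw [mul_zero]; exact hres _⟩

theorem apply_self_mem_regularAt [NeZero (2 : K)] (hF : IsAdmissible q F) {z : Kˣ} {i : ℤ}
    (hz : z ^ 2 = q ^ (2 * i)) : F i ∈ regularAt (z : K) := by
  obtain ⟨r, hr, hr'⟩ := hF.exists_hasResidueAt z i 0 hz
  rw [sub_zero] at hr
  rw [add_zero] at hr'
  have hneg : r = -r := by simpa using hr.unique hr'
  have hr0 : r = 0 := by
    rw [eq_neg_iff_add_eq_zero, ← two_mul] at hneg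
    exact (mul_eq_zero.1 hneg).resolve_left two_ne_zero
  exact HasResidueAt.mem_regularAt (hr0 ▸ hr)

end IsAdmissible

/-- The subspace of admissible families. -/
def admissible (q : Kˣ) : Submodule K (ℤ →₀ RatFunc K) where
  carrier := {F | IsAdmissible q F}
  add_mem' := IsAdmissible.add
  zero_mem' := by simpa using (IsAdmissible.single_zero_one (q := q)).smul 0
  smul_mem' c _ := IsAdmissible.smul c

/-- Left multiplication by `v ^ a + v ^ (-a)`. -/
def symMul (q : Kˣ) (a : ℤ) : (ℤ →₀ RatFunc K) →ₗ[K] ℤ →₀ RatFunc K :=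
  weylMul q 0 (RatFunc.X ^ a + RatFunc.X ^ (-a))

/-- Left multiplication by `w v ^ a (v - v⁻¹)⁻¹ + w⁻¹ v ^ (-a) (v - v⁻¹)⁻¹`, which is
`q ^ a (v ^ a u₊ + v ^ (-a) u₋)`. -/
def uMul (q : Kˣ) (a : ℤ) : (ℤ →₀ RatFunc K) →ₗ[K] ℤ →₀ RatFunc K :=
  weylMul q 1 (uCoeff K a) + weylMul q (-1) (uCoeff K (-a))

theorem symMul_apply (a : ℤ) (F : ℤ →₀ RatFunc K) (n : ℤ) :
    symMul q a F n = scaleX (q ^ (-n)) (RatFunc.X ^ a + RatFunc.X ^ (-a)) * F n := by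
  rw [symMul, weylMul_apply, sub_zero]

theorem uMul_apply (a : ℤ) (F : ℤ →₀ RatFunc K) (n : ℤ) :
    uMul q a F n = scaleX (q ^ (-(n - 1))) (uCoeff K a) * F (n - 1) +
      scaleX (q ^ (-(n + 1))) (uCoeff K (-a)) * F (n + 1) := by
  rw [uMul, LinearMap.add_apply, Finsupp.add_apply, weylMul_apply, weylMul_apply, sub_neg_eq_add]

theorem uCoeff_mem_coeffAlgebra (a : ℤ) : uCoeff K a ∈ coeffAlgebra q :=
  mem_coeffAlgebra_iff.2 fun _ hz =>
    (hasValueAt_uCoeff a (by simpa using hz 0)).mem_regularAt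

theorem symMul_apply_mem_coeffAlgebra (a : ℤ) (hF : ∀ n, F n ∈ coeffAlgebra q) (n : ℤ) :
    symMul q a F n ∈ coeffAlgebra q :=
  weylMul_apply_mem_coeffAlgebra
    (add_mem (X_zpow_mem_coeffAlgebra a) (X_zpow_mem_coeffAlgebra (-a))) hF 0 n

theorem uMul_apply_mem_coeffAlgebra (a : ℤ) (hF : ∀ n, F n ∈ coeffAlgebra q) (n : ℤ) :
    uMul q a F n ∈ coeffAlgebra q :=
  add_mem (weylMul_apply_mem_coeffAlgebra (uCoeff_mem_coeffAlgebra a) hF 1 n)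
    (weylMul_apply_mem_coeffAlgebra (uCoeff_mem_coeffAlgebra (-a)) hF (-1) n)

theorem zpow_mul_eq_inv_of_sq_eq {z : Kˣ} {i : ℤ} (hz : z ^ 2 = q ^ (2 * i)) (m : ℤ) :
    q ^ (-(i - m)) * z = (q ^ (-(i + m)) * z)⁻¹ := by
  rw [← mul_eq_one_iff_eq_inv, mul_mul_mul_comm, ← zpow_add, ← pow_two, hz, ← zpow_add,
    show -(i - m) + -(i + m) + 2 * i = 0 by ring, zpow_zero]

theorem zpow_mul_sq {z : Kˣ} {i : ℤ} (hz : z ^ 2 = q ^ (2 * i)) (m : ℤ) :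
    (q ^ (-(i + m)) * z) ^ 2 = q ^ (-2 * m) := by
  rw [mul_pow, hz, ← zpow_natCast, ← zpow_mul, ← zpow_add]
  congr 1
  push_cast
  ring

theorem IsAdmissible.symMul (hF : IsAdmissible q F) (a : ℤ) :
    IsAdmissible q (symMul q a F) where
  apply_mem_coeffAlgebra := symMul_apply_mem_coeffAlgebra a hF.apply_mem_coeffAlgebra
  invX_apply_neg n := by
    have hinv : invX (RatFunc.X ^ a + RatFunc.X ^ (-a) : RatFunc K) =
        RatFunc.X ^ a + RatFunc.X ^ (-a) := by
      rw [map_add, map_zpow₀, map_zpow₀, invX_X, inv_zpow', inv_zpow', neg_neg, add_comm]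
    rw [_root_.symMul, invX_weylMul_apply_neg hF.invX_apply_neg, hinv, neg_zero, zpow_zero,
      one_mul]
  exists_hasResidueAt z i k hz := by
    obtain ⟨r, hr, hr'⟩ := hF.exists_hasResidueAt z i k hz
    have hval (x : Kˣ) : HasValueAt (RatFunc.X ^ a + RatFunc.X ^ (-a) : RatFunc K) x
        (x ^ a + x ^ (-a) : K) :=
      ((HasValueAt.X _).zpow x.ne_zero a).add ((HasValueAt.X _).zpow x.ne_zero (-a))
    have hright := (hval (q ^ (-(i + k)) * z)).scaleX
    have hleft := (hval (q ^ (-(i - k)) * z)).scaleX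
    have hsymm : ((q ^ (-(i - k)) * z : Kˣ) : K) ^ a + ((q ^ (-(i - k)) * z : Kˣ) : K) ^ (-a) =
        ((q ^ (-(i + k)) * z : Kˣ) : K) ^ a + ((q ^ (-(i + k)) * z : Kˣ) : K) ^ (-a) := by
      rw [zpow_mul_eq_inv_of_sq_eq hz, Units.val_inv_eq_inv_val, inv_zpow', inv_zpow', neg_neg,
        add_comm]
    rw [hsymm] at hleft
    rw [symMul_apply, symMul_apply]
    exact ⟨_, HasResidueAt.mul_left hleft hr, by
      rw [mul_left_comm]; exact HasResidueAt.mul_left hright hr'⟩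

theorem IsAdmissible.exists_hasResidueAt_uCoeff_mul_self [NeZero (2 : K)]
    (hF : IsAdmissible q F) (a : ℤ) {z : Kˣ} {i : ℤ} (hz : z ^ 2 = q ^ (2 * i)) :
    ∃ r, HasResidueAt (scaleX (q ^ (-i)) (uCoeff K a) * F i) z r ∧
      HasResidueAt (scaleX (q ^ (-i)) (uCoeff K (-a)) * F i) z r := by
  obtain ⟨b, hb⟩ := mem_regularAt_iff_exists_hasValueAt.1 (hF.apply_self_mem_regularAt hz)
  have hsq : (q ^ (-i) * z) ^ 2 = 1 := by simpa using zpow_mul_sq hz 0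
  have hinv : ((q ^ (-i) * z : Kˣ) : K)⁻¹ = (q ^ (-i) * z : Kˣ) := by
    rw [← Units.val_inv_eq_inv_val, Units.val_inj, inv_eq_iff_mul_eq_one, ← pow_two, hsq]
  have hres := (hasResidueAt_uCoeff a hsq).scaleX
  have hres' := (hasResidueAt_uCoeff (-a) hsq).scaleX
  have hzpow : ((q ^ (-i) * z : Kˣ) : K) ^ (-a) = ((q ^ (-i) * z : Kˣ) : K) ^ a := by
    rw [← inv_zpow', hinv]
  rw [hzpow] at hres'
  exact ⟨_, hres.mul_right hb, hres'.mul_right hb⟩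

theorem IsAdmissible.exists_hasResidueAt_uCoeff_mul [NeZero (2 : K)] (hF : IsAdmissible q F)
    (hq : ¬IsOfFinOrder q) (a : ℤ) {z : Kˣ} {i : ℤ} (hz : z ^ 2 = q ^ (2 * i)) (m : ℤ) :
    ∃ r, HasResidueAt (scaleX (q ^ (-(i + m))) (uCoeff K a) * F (i + m)) z r ∧
      HasResidueAt (scaleX (q ^ (-(i - m))) (uCoeff K (-a)) * F (i - m)) z ((-1) ^ m * r) := by
  obtain rfl | hm := eq_or_ne m 0
  · simpa using hF.exists_hasResidueAt_uCoeff_mul_self a hz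
  set x : Kˣ := q ^ (-(i + m)) * z
  have hxinv : q ^ (-(i - m)) * z = x⁻¹ := zpow_mul_eq_inv_of_sq_eq hz m
  have hx : x ^ 2 ≠ 1 := by
    rw [zpow_mul_sq hz, ← zpow_zero q]
    exact fun h => hm (by simpa using injective_zpow_iff_not_isOfFinOrder.2 hq h)
  obtain ⟨r, hr, hr'⟩ := hF.exists_hasResidueAt z i m hz
  have hval := (hasValueAt_uCoeff a hx).scaleX
  have hval' := hasValueAt_uCoeff (-a) (x := x⁻¹) (by simpa using hx)
  rw [← hxinv] at hval'
  refine ⟨_, HasResidueAt.mul_left hval hr', ?_⟩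
  convert HasResidueAt.mul_left hval'.scaleX hr using 1
  have hsign : (-1 : K) ^ m * (-1) ^ m = 1 := by rw [← mul_zpow]; simp
  rw [hxinv, Units.val_inv_eq_inv_val, inv_zpow', neg_neg, inv_inv, ← neg_sub, inv_neg,
    zpow_add_one₀ (by simp)]
  linear_combination ((x : K) ^ a * (-(x : K) + (x : K)⁻¹)⁻¹ * r) * hsign

theorem IsAdmissible.uMul [NeZero (2 : K)] (hF : IsAdmissible q F) (hq : ¬IsOfFinOrder q)
    (a : ℤ) : IsAdmissible q (uMul q a F) where
  apply_mem_coeffAlgebra := uMul_apply_mem_coeffAlgebra a hF.apply_mem_coeffAlgebra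
  invX_apply_neg n := by
    rw [_root_.uMul, LinearMap.add_apply, Finsupp.add_apply, Finsupp.add_apply, map_add,
      invX_weylMul_apply_neg hF.invX_apply_neg, invX_weylMul_apply_neg hF.invX_apply_neg,
      invX_uCoeff, invX_uCoeff]
    simp [mul_add, add_comm]
  exists_hasResidueAt z i k hz := by
    obtain ⟨r, hr, hr'⟩ := hF.exists_hasResidueAt_uCoeff_mul hq a hz (k - 1)
    obtain ⟨s, hs, hs'⟩ := hF.exists_hasResidueAt_uCoeff_mul hq a hz (-(k + 1))
    refine ⟨s + (-1) ^ (k - 1) * r, ?_, ?_⟩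
    · rw [uMul_apply]
      convert hs.add hr' using 4 <;> ring_nf
    · rw [uMul_apply]
      have hsign : (-1 : K) ^ (k + 1) * (-1) ^ (k - 1) = 1 := by
        rw [← zpow_add₀ (by simp), show k + 1 + (k - 1) = 2 * k by ring, zpow_mul]; simp
      have hsign' : (-1 : K) ^ (-(k + 1)) = (-1) ^ (k + 1) := by rw [← inv_zpow', inv_neg_one]
      have hsum : (-1 : K) ^ (k + 1) * (s + (-1) ^ (k - 1) * r) =
          r + (-1) ^ (-(k + 1)) * s := by
        rw [hsign']; linear_combination r * hsign
      rw [hsum]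
      convert hr.add hs' using 4 <;> ring_nf

end Admissible

section Spanning

variable {K : Type*} [Field K] {q : Kˣ} {F : ℤ →₀ RatFunc K} {N : Submodule K (ℤ →₀ RatFunc K)}

/-- The subspace `N` contains `1` and is stable under left multiplication by the generators
of `𝒜`. -/
structure IsGeneratorStable (q : Kˣ) (N : Submodule K (ℤ →₀ RatFunc K)) : Prop where
  single_zero_one_mem : Finsupp.single 0 1 ∈ N
  symMul_mem : ∀ a, ∀ F ∈ N, symMul q a F ∈ N
  uMul_mem : ∀ a, ∀ F ∈ N, uMul q a F ∈ N

theorem isGeneratorStable_admissible [NeZero (2 : K)] (hq : ¬IsOfFinOrder q) :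
    IsGeneratorStable q (admissible q) where
  single_zero_one_mem := IsAdmissible.single_zero_one
  symMul_mem a _ hF := IsAdmissible.symMul hF a
  uMul_mem a _ hF := IsAdmissible.uMul hF hq a

theorem IsGeneratorStable.inf {M : Submodule K (ℤ →₀ RatFunc K)} (hM : IsGeneratorStable q M)
    (hN : IsGeneratorStable q N) : IsGeneratorStable q (M ⊓ N) where
  single_zero_one_mem := ⟨hM.single_zero_one_mem, hN.single_zero_one_mem⟩
  symMul_mem a F hF := ⟨hM.symMul_mem a F hF.1, hN.symMul_mem a F hF.2⟩
  uMul_mem a F hF := ⟨hM.uMul_mem a F hF.1, hN.uMul_mem a F hF.2⟩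

/-- The coefficients `fₙ` of the families in `N` with `fₘ = 0` for all `m > n`. -/
def topCoeffs (N : Submodule K (ℤ →₀ RatFunc K)) (n : ℤ) : Submodule K (RatFunc K) :=
  (N ⊓ Finsupp.supported (RatFunc K) K (Set.Iic n)).map (Finsupp.lapply n)

theorem mem_topCoeffs {n : ℤ} {f : RatFunc K} :
    f ∈ topCoeffs N n ↔ ∃ F ∈ N, (∀ m, n < m → F m = 0) ∧ F n = f := by
  simp [topCoeffs, Finsupp.mem_supported', and_assoc]

/-- The common denominator `∏_{0 ≤ j < n} (q ^ (-j) v - q ^ j v⁻¹)` of the top coefficients `fₙ`. -/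
def topDenom (q : Kˣ) (n : ℕ) : RatFunc K :=
  ∏ j ∈ Finset.range n, scaleX (q ^ (-j : ℤ)) (RatFunc.X - RatFunc.X⁻¹)

theorem ratFuncX_sub_inv_ne_zero : (RatFunc.X - RatFunc.X⁻¹ : RatFunc K) ≠ 0 := by
  rw [sub_ne_zero, ne_eq, ← mul_eq_one_iff_eq_inv₀ RatFunc.X_ne_zero, ← RatFunc.algebraMap_X,
    ← map_mul, ← map_one (algebraMap K[X] (RatFunc K)), (RatFunc.algebraMap_injective K).eq_iff]
  exact fun h => not_isUnit_X (IsUnit.of_mul_eq_one _ h)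

theorem topDenom_zero : topDenom q 0 = 1 := Finset.prod_range_zero _

theorem topDenom_succ (n : ℕ) :
    topDenom q (n + 1) = topDenom q n * scaleX (q ^ (-n : ℤ)) (RatFunc.X - RatFunc.X⁻¹) :=
  Finset.prod_range_succ _ n

theorem topDenom_ne_zero (n : ℕ) : topDenom q n ≠ 0 :=
  Finset.prod_ne_zero_iff.2 fun _ _ => (_root_.map_ne_zero _).2 ratFuncX_sub_inv_ne_zero

theorem HasValueAt.prod {ι : Type*} (s : Finset ι) {f : ι → RatFunc K} {z : K} {a : ι → K}
    (h : ∀ i ∈ s, HasValueAt (f i) z (a i)) : HasValueAt (∏ i ∈ s, f i) z (∏ i ∈ s, a i) := by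
  induction s using Finset.cons_induction with
  | empty => simpa using HasValueAt.C 1 z
  | cons i s hi ih =>
    rw [Finset.prod_cons, Finset.prod_cons]
    exact (h i (Finset.mem_cons_self i s)).mul
      (ih fun j hj => h j (Finset.mem_cons_of_mem hj))

theorem hasValueAt_topDenom (n : ℕ) (z : Kˣ) : HasValueAt (topDenom q n) (z : K)
    (∏ j ∈ Finset.range n,
      (((q ^ (-j : ℤ) * z : Kˣ) : K) - ((q ^ (-j : ℤ) * z : Kˣ) : K)⁻¹)) :=
  HasValueAt.prod _ fun _ _ =>
    HasValueAt.scaleX ((HasValueAt.X _).sub ((HasValueAt.X _).inv (Units.ne_zero _)))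

theorem hasValueAt_topDenom_zero {n j : ℕ} (hj : j < n) {z : Kˣ} (hz : z ^ 2 = q ^ (2 * j : ℤ)) :
    HasValueAt (topDenom q n) (z : K) 0 := by
  have hsq : (q ^ (-j : ℤ) * z) ^ 2 = 1 := by simpa using zpow_mul_sq hz 0
  have hinv : q ^ (-j : ℤ) * z = (q ^ (-j : ℤ) * z)⁻¹ := by
    rwa [← mul_eq_one_iff_eq_inv, ← pow_two]
  have h := hasValueAt_topDenom (q := q) n z
  rwa [Finset.prod_eq_zero (Finset.mem_range.2 hj)
    (by rw [← Units.val_inv_eq_inv_val, ← hinv, sub_self])] at h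

theorem IsAdmissible.apply_neg_eq_zero (hF : IsAdmissible q F) {n : ℤ} (hn : F n = 0) :
    F (-n) = 0 := by
  simpa [hn] using hF.invX_apply_neg n

theorem IsAdmissible.mul_topDenom_mem_regularAt [NeZero (2 : K)] (hF : IsAdmissible q F)
    {n : ℕ} (hn : ∀ m : ℤ, n < m → F m = 0) (z : Kˣ) : F n * topDenom q n ∈ regularAt (z : K) := by
  have hdenom := hasValueAt_topDenom (q := q) n z
  by_cases hz : ∀ j : ℤ, z ^ 2 ≠ q ^ (2 * j)
  · exact mul_mem (mem_coeffAlgebra_iff.1 (hF.apply_mem_coeffAlgebra n) z hz) hdenom.mem_regularAt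
  push Not at hz
  obtain ⟨j, hj⟩ := hz
  obtain ⟨r, hr, hr'⟩ := hF.exists_hasResidueAt z j (n - j) hj
  rw [add_sub_cancel] at hr'
  by_cases hjn : 0 ≤ j ∧ j < n
  · lift j to ℕ using hjn.1
    exact hr'.mul_mem_regularAt (hasValueAt_topDenom_zero (by exact_mod_cast hjn.2) hj)
  refine mul_mem ?_ hdenom.mem_regularAt
  obtain rfl | hne := eq_or_ne j n
  · exact hF.apply_self_mem_regularAt hj
  have hzero : F (j - (n - j)) = 0 := by
    obtain hlt | hlt : (n : ℤ) < j - (n - j) ∨ (n : ℤ) < -(j - (n - j)) := by lia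
    · exact hn _ hlt
    · simpa using hF.apply_neg_eq_zero (hn _ hlt)
  rw [hzero] at hr
  have hr0 : r = 0 := hr.unique (by simpa using (HasValueAt.C 0 (z : K)).hasResidueAt_zero)
  rw [hr0, mul_zero] at hr'
  exact hr'.mem_regularAt

namespace IsGeneratorStable

theorem zpow_mul_mem_topCoeffs (hN : IsGeneratorStable q N) {n : ℤ} {f : RatFunc K}
    (hf : f ∈ topCoeffs N n) (a : ℤ) :
    RatFunc.X ^ a * (f * (scaleX (q ^ (-n)) (RatFunc.X - RatFunc.X⁻¹))⁻¹) ∈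
      topCoeffs N (n + 1) := by
  obtain ⟨F, hF, hFn, rfl⟩ := mem_topCoeffs.1 hf
  refine mem_topCoeffs.2 ⟨(((q ^ (-n)) ^ a : Kˣ) : K)⁻¹ • uMul q a F,
    N.smul_mem _ (hN.uMul_mem a F hF), fun m hm => ?_, ?_⟩
  · rw [Finsupp.smul_apply, uMul_apply, hFn _ (by lia), hFn _ (by lia), mul_zero, mul_zero,
      add_zero, smul_zero]
  · have hcancel : RatFunc.C (((q ^ (-n)) ^ a : Kˣ) : K)⁻¹ *
        RatFunc.C ((q ^ (-n) : Kˣ) : K) ^ a = 1 := by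
      rw [← map_zpow₀, ← map_mul, ← Units.val_zpow_eq_zpow_val, inv_mul_cancel₀ (Units.ne_zero _),
        map_one]
    rw [Finsupp.smul_apply, uMul_apply, add_sub_cancel_right, hFn (n + 1 + 1) (by lia), mul_zero,
      add_zero, uCoeff, map_mul, map_zpow₀, map_inv₀, scaleX_X, mul_zpow,
      RatFunc.smul_eq_C_mul]
    linear_combination (RatFunc.X ^ a *
      (F n * (scaleX (q ^ (-n)) (RatFunc.X - RatFunc.X⁻¹))⁻¹)) * hcancel

theorem topDenom_inv_mem_topCoeffs (hN : IsGeneratorStable q N) (n : ℕ) :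
    (topDenom q n)⁻¹ ∈ topCoeffs N n := by
  induction n with
  | zero =>
    exact mem_topCoeffs.2 ⟨_, hN.single_zero_one_mem,
      fun m hm => Finsupp.single_eq_of_ne hm.ne', by simp [topDenom_zero]⟩
  | succ n ih =>
    rw [topDenom_succ, mul_inv, Nat.cast_succ]
    simpa only [zpow_zero, one_mul] using hN.zpow_mul_mem_topCoeffs ih 0

theorem single_add_invX_mem (hN : IsGeneratorStable q N) {f : RatFunc K}
    (hf : f ∈ Submodule.span K (Set.range fun n : ℤ => (RatFunc.X : RatFunc K) ^ n)) :
    Finsupp.single 0 (f + invX f) ∈ N := by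
  let S : RatFunc K →ₗ[K] ℤ →₀ RatFunc K :=
    Finsupp.lsingle 0 ∘ₗ (LinearMap.id + (invX : RatFunc K →ₐ[K] RatFunc K).toLinearMap)
  have hspan : Submodule.span K (Set.range fun n : ℤ => (RatFunc.X : RatFunc K) ^ n) ≤
      N.comap S := by
    rw [Submodule.span_le]
    rintro _ ⟨n, rfl⟩
    have hsym := hN.symMul_mem n _ hN.single_zero_one_mem
    rw [symMul, weylMul_single] at hsym
    simpa [S, invX_X, scaleX_X] using hsym
  exact hspan hf

end IsGeneratorStable

variable [IsAlgClosed K] [NeZero (2 : K)]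

theorem IsAdmissible.apply_mem_topCoeffs (hF : IsAdmissible q F) (hN : IsGeneratorStable q N)
    {n : ℕ} (hn : ∀ m : ℤ, n < m → F m = 0) : F n ∈ topCoeffs N n := by
  have hlaurent : F n * topDenom q n ∈
      Submodule.span K (Set.range fun n : ℤ => (RatFunc.X : RatFunc K) ^ n) :=
    mem_span_range_X_zpow fun z hz => hF.mul_topDenom_mem_regularAt hn (Units.mk0 z hz)
  cases n with
  | zero =>
    rw [topDenom_zero, mul_one, Nat.cast_zero] at hlaurent
    have hmem := N.smul_mem (2 : K)⁻¹ (hN.single_add_invX_mem hlaurent)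
    have hinv : invX (F 0) = F 0 := by simpa using hF.invX_apply_neg 0
    refine mem_topCoeffs.2 ⟨_, hmem, fun m hm => ?_, ?_⟩
    · rw [Finsupp.smul_apply, Finsupp.single_eq_of_ne (Nat.cast_zero (R := ℤ) ▸ hm.ne'),
        smul_zero]
    · rw [Nat.cast_zero, Finsupp.smul_apply, Finsupp.single_eq_same, hinv, ← two_smul K,
        smul_smul, inv_mul_cancel₀ two_ne_zero, one_smul]
  | succ n =>
    have hspan : Submodule.span K (Set.range fun n : ℤ => (RatFunc.X : RatFunc K) ^ n) ≤
        (topCoeffs N (n + 1)).comap (LinearMap.mulRight K (topDenom q (n + 1))⁻¹) := by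
      rw [Submodule.span_le]
      rintro _ ⟨a, rfl⟩
      rw [topDenom_succ, mul_inv]
      exact hN.zpow_mul_mem_topCoeffs (hN.topDenom_inv_mem_topCoeffs n) a
    simpa [mul_assoc, topDenom_ne_zero] using hspan hlaurent

theorem IsGeneratorStable.admissible_le (hq : ¬IsOfFinOrder q) (hN : IsGeneratorStable q N) :
    admissible q ≤ N := by
  have hM := hN.inf (isGeneratorStable_admissible hq)
  suffices h : ∀ (n : ℕ) (F : ℤ →₀ RatFunc K), IsAdmissible q F → (∀ m : ℤ, n ≤ m → F m = 0) →
      F ∈ N by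
    intro F hF
    obtain ⟨b, hb⟩ := F.support.bddAbove
    refine h (b.toNat + 1) F hF fun m hm => Finsupp.notMem_support_iff.1 fun hm' => ?_
    have := hb hm'
    lia
  intro n
  induction n with
  | zero =>
    intro F hF hn
    have hF0 : F = 0 := Finsupp.ext fun m => by
      obtain hm | hm := le_total 0 m
      · exact hn m hm
      · simpa using hF.apply_neg_eq_zero (hn (-m) (by lia))
    rw [hF0]
    exact zero_mem N
  | succ n ih =>
    intro F hF hn
    obtain ⟨G, ⟨hGN, hG⟩, hGn, hGF⟩ := mem_topCoeffs.1 <|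
      hF.apply_mem_topCoeffs hM (n := n) fun m hm => hn m (by push_cast; lia)
    have hsub : IsAdmissible q (F - G) := (admissible q).sub_mem hF hG
    have hmem := ih (F - G) hsub fun m hm => by
      obtain rfl | hlt := hm.eq_or_lt
      · rw [Finsupp.sub_apply, hGF, sub_self]
      · rw [Finsupp.sub_apply, hGn m hlt, hn m (by push_cast; lia), sub_zero]
    simpa using N.add_mem hmem hGN

end Spanning

section Operators

variable {q : ℝ} {hq : 0 < q} {f g φ : RatFunc ℂ} {F G : ℤ →₀ RatFunc ℂ}

/-- The parameter `q` as a unit of `ℂ`. -/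
def qUnit (hq : 0 < q) : ℂˣ := Units.mk0 (q : ℂ) (by exact_mod_cast hq.ne')

theorem not_isOfFinOrder_qUnit (hq1 : q ≠ 1) : ¬IsOfFinOrder (qUnit hq) := by
  rw [isOfFinOrder_iff_pow_eq_one]
  rintro ⟨n, hn, hpow⟩
  have hcomplex : (q : ℂ) ^ n = 1 := congrArg Units.val hpow
  have hreal : q ^ n = 1 := by exact_mod_cast hcomplex
  exact hq1 ((pow_eq_one_iff_of_nonneg hq.le hn.ne').1 hreal)

theorem sq_eq_qUnit_zpow_iff {z : ℂˣ} {j : ℤ} :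
    z ^ 2 = qUnit hq ^ (2 * j) ↔ (z : ℂ) = (q : ℂ) ^ j ∨ (z : ℂ) = -(q : ℂ) ^ j := by
  rw [← sq_eq_sq_iff_eq_or_eq_neg, mul_comm, zpow_mul, ← Units.val_inj]
  simp [qUnit]

/-- A point of `Dom q` as a unit of `ℂ`. -/
def Dom.unit (z : Dom q) : ℂˣ := Units.mk0 z.1 z.2.1

theorem Dom.unit_sq_ne (z : Dom q) (j : ℤ) : z.unit ^ 2 ≠ qUnit hq ^ (2 * j) := fun h =>
  (sq_eq_qUnit_zpow_iff.1 h).elim (z.2.2 j).1 (z.2.2 j).2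

theorem Dom.hasValueAt (hf : f ∈ coeffAlgebra (qUnit hq)) (z : Dom q) :
    HasValueAt f z.1 (f.eval (RingHom.id ℂ) z.1) :=
  ⟨mem_coeffAlgebra_iff.1 hf z.unit z.unit_sq_ne, rfl⟩

theorem mulOp_apply (f : RatFunc ℂ) (u : Dom q → ℂ) (z : Dom q) :
    mulOp q f u z = f.eval (RingHom.id ℂ) z.1 * u z := rfl

theorem shiftOp_apply (n : ℤ) (u : Dom q → ℂ) (z : Dom q) :
    shiftOp hq n u z = u (shiftMem hq n z) := rfl

theorem shiftMem_val (n : ℤ) (z : Dom q) :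
    (shiftMem hq n z).1 = ((qUnit hq ^ n * z.unit : ℂˣ) : ℂ) := by
  simp [shiftMem, qUnit, Dom.unit]

theorem shiftOp_zero : shiftOp hq 0 = 1 := by
  ext u z
  exact congrArg u (Subtype.ext (by simp [shiftMem]))

theorem shiftOp_mul_shiftOp (m n : ℤ) :
    shiftOp hq m * shiftOp hq n = shiftOp hq (n + m) := by
  ext u z
  refine congrArg u (Subtype.ext ?_)
  change (q : ℂ) ^ n * ((q : ℂ) ^ m * z.1) = (q : ℂ) ^ (n + m) * z.1
  rw [zpow_add₀ (by exact_mod_cast hq.ne'), mul_assoc]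

theorem mulOp_zero : mulOp q 0 = 0 := by
  ext u z
  simp [mulOp_apply]

theorem mulOp_one : mulOp q 1 = 1 := by
  ext u z
  simp [mulOp_apply]

theorem mulOp_add (hf : f ∈ coeffAlgebra (qUnit hq)) (hg : g ∈ coeffAlgebra (qUnit hq)) :
    mulOp q (f + g) = mulOp q f + mulOp q g := by
  ext u z
  simp only [LinearMap.add_apply, Pi.add_apply, mulOp_apply,
    ((z.hasValueAt hf).add (z.hasValueAt hg)).eval_eq, add_mul]

theorem mulOp_mul (hf : f ∈ coeffAlgebra (qUnit hq)) (hg : g ∈ coeffAlgebra (qUnit hq)) :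
    mulOp q (f * g) = mulOp q f * mulOp q g := by
  ext u z
  simp only [Module.End.mul_apply, mulOp_apply,
    ((z.hasValueAt hf).mul (z.hasValueAt hg)).eval_eq, mul_assoc]

theorem mulOp_smul (c : ℂ) (hf : f ∈ coeffAlgebra (qUnit hq)) :
    mulOp q (c • f) = c • mulOp q f := by
  ext u z
  simp only [LinearMap.smul_apply, Pi.smul_apply, mulOp_apply, RatFunc.smul_eq_C_mul,
    ((HasValueAt.C c z.1).mul (z.hasValueAt hf)).eval_eq, mul_assoc, smul_eq_mul]

theorem mulOp_mul_shiftOp (hφ : φ ∈ coeffAlgebra (qUnit hq)) (n : ℤ) :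
    mulOp q φ * shiftOp hq n = shiftOp hq n * mulOp q (scaleX (qUnit hq ^ (-n)) φ) := by
  ext u z
  have hpoint : ((qUnit hq ^ (-n) * (shiftMem hq n z).unit : ℂˣ) : ℂ) = z.1 := by
    change _ * (shiftMem hq n z).1 = z.1
    rw [shiftMem_val, ← Units.val_mul, ← mul_assoc, ← zpow_add, neg_add_cancel, zpow_zero, one_mul]
    rfl
  have hval := z.hasValueAt hφ
  rw [← hpoint] at hval
  have heval : (scaleX (qUnit hq ^ (-n)) φ).eval (RingHom.id ℂ) (shiftMem hq n z).1 =
      φ.eval (RingHom.id ℂ) z.1 := hval.scaleX.eval_eq.trans (by rw [hpoint])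
  simp only [Module.End.mul_apply, mulOp_apply, shiftOp_apply, heval]

theorem wform_eq_sum {s : Finset ℤ} (hs : F.support ⊆ s) :
    wform hq F = ∑ n ∈ s, shiftOp hq n * mulOp q (F n) :=
  Finsupp.sum_of_support_subset _ hs _ fun _ _ => by rw [mulOp_zero, mul_zero]

theorem wform_add (hF : ∀ n, F n ∈ coeffAlgebra (qUnit hq))
    (hG : ∀ n, G n ∈ coeffAlgebra (qUnit hq)) : wform hq (F + G) = wform hq F + wform hq G := by
  rw [wform_eq_sum Finsupp.support_add, wform_eq_sum Finset.subset_union_left,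
    wform_eq_sum (F := G) Finset.subset_union_right, ← Finset.sum_add_distrib]
  refine Finset.sum_congr rfl fun n _ => ?_
  rw [Finsupp.add_apply, mulOp_add (hF n) (hG n), mul_add]

theorem wform_smul (c : ℂ) (hF : ∀ n, F n ∈ coeffAlgebra (qUnit hq)) :
    wform hq (c • F) = c • wform hq F := by
  rw [wform_eq_sum Finsupp.support_smul, wform_eq_sum subset_rfl, Finset.smul_sum]
  refine Finset.sum_congr rfl fun n _ => ?_
  rw [Finsupp.smul_apply, mulOp_smul c (hF n), mul_smul_comm]

theorem wform_single_zero_one : wform hq (Finsupp.single 0 1) = 1 := by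
  rw [wform, Finsupp.sum_single_index (by rw [mulOp_zero, mul_zero]), shiftOp_zero, mulOp_one,
    one_mul]

theorem wform_weylMul (hφ : φ ∈ coeffAlgebra (qUnit hq))
    (hF : ∀ n, F n ∈ coeffAlgebra (qUnit hq)) (e : ℤ) :
    wform hq (weylMul (qUnit hq) e φ F) = shiftOp hq e * mulOp q φ * wform hq F := by
  have hsupport : (weylMul (qUnit hq) e φ F).support ⊆
      F.support.map (addRightEmbedding e) := fun n hn => by
    rw [Finsupp.mem_support_iff, weylMul_apply] at hn
    exact Finset.mem_map.2
      ⟨n - e, Finsupp.mem_support_iff.2 (right_ne_zero_of_mul hn), sub_add_cancel n e⟩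
  rw [wform_eq_sum hsupport, wform_eq_sum subset_rfl, Finset.sum_map, Finset.mul_sum]
  refine Finset.sum_congr rfl fun n _ => ?_
  rw [addRightEmbedding_apply, weylMul_apply, add_sub_cancel_right,
    mulOp_mul (scaleX_zpow_mem_coeffAlgebra hφ _) (hF n), mul_assoc (shiftOp hq e),
    ← mul_assoc (mulOp q φ), mulOp_mul_shiftOp hφ, ← shiftOp_mul_shiftOp]
  simp only [mul_assoc]

theorem wform_symMul (a : ℤ) (hF : ∀ n, F n ∈ coeffAlgebra (qUnit hq)) :
    wform hq (symMul (qUnit hq) a F) =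
      mulOp q (RatFunc.X ^ a + RatFunc.X ^ (-a)) * wform hq F := by
  rw [symMul, wform_weylMul (add_mem (X_zpow_mem_coeffAlgebra a) (X_zpow_mem_coeffAlgebra (-a)))
    hF, shiftOp_zero, one_mul]

theorem shiftOp_mul_mulOp_uCoeff (e a : ℤ) :
    shiftOp hq e * mulOp q (uCoeff ℂ a) = ((qUnit hq ^ (e * a) : ℂˣ) : ℂ) •
      (mulOp q (RatFunc.X ^ a) * (shiftOp hq e * mulOp q (RatFunc.X - RatFunc.X⁻¹)⁻¹)) := by
  have hD : (RatFunc.X - RatFunc.X⁻¹ : RatFunc ℂ)⁻¹ ∈ coeffAlgebra (qUnit hq) := by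
    simpa [uCoeff] using uCoeff_mem_coeffAlgebra (K := ℂ) (q := qUnit hq) 0
  have hX : RatFunc.X ^ a ∈ coeffAlgebra (qUnit hq) := X_zpow_mem_coeffAlgebra a
  have hscale : uCoeff ℂ a = ((qUnit hq ^ (e * a) : ℂˣ) : ℂ) •
      (scaleX (qUnit hq ^ (-e)) (RatFunc.X ^ a) * (RatFunc.X - RatFunc.X⁻¹)⁻¹) := by
    rw [map_zpow₀, scaleX_X, mul_zpow, ← map_zpow₀, ← Units.val_zpow_eq_zpow_val, ← zpow_mul,
      RatFunc.smul_eq_C_mul, ← mul_assoc, ← mul_assoc, ← map_mul, ← Units.val_mul, ← zpow_add,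
      neg_mul, add_neg_cancel, zpow_zero, Units.val_one, map_one, one_mul, uCoeff]
  rw [hscale, mulOp_smul _ (mul_mem (scaleX_zpow_mem_coeffAlgebra hX _) hD),
    mulOp_mul (scaleX_zpow_mem_coeffAlgebra hX _) hD, ← mul_assoc (mulOp q (RatFunc.X ^ a)),
    mulOp_mul_shiftOp hX, mul_smul_comm, mul_assoc]

theorem wform_uMul (a : ℤ) (hF : ∀ n, F n ∈ coeffAlgebra (qUnit hq)) :
    wform hq (uMul (qUnit hq) a F) = ((qUnit hq ^ a : ℂˣ) : ℂ) •
      ((mulOp q (RatFunc.X ^ a) * uPlus hq + mulOp q (RatFunc.X ^ (-a)) * uMinus hq) *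
        wform hq F) := by
  have hmem (e a : ℤ) (n : ℤ) : weylMul (qUnit hq) e (uCoeff ℂ a) F n ∈ coeffAlgebra (qUnit hq) :=
    weylMul_apply_mem_coeffAlgebra (uCoeff_mem_coeffAlgebra a) hF e n
  rw [uMul, LinearMap.add_apply, wform_add (hmem 1 a) (hmem (-1) (-a)),
    wform_weylMul (uCoeff_mem_coeffAlgebra a) hF, wform_weylMul (uCoeff_mem_coeffAlgebra (-a)) hF,
    shiftOp_mul_mulOp_uCoeff, shiftOp_mul_mulOp_uCoeff, one_mul, neg_mul_neg, one_mul, ← add_mul,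
    ← smul_add, smul_mul_assoc, uPlus, uMinus]

theorem exists_mul_wform_eq (hq1 : q ≠ 1) {a : Module.End ℂ (Dom q → ℂ)} (ha : a ∈ Acal hq) :
    ∀ F, IsAdmissible (qUnit hq) F →
      ∃ G, IsAdmissible (qUnit hq) G ∧ a * wform hq F = wform hq G := by
  induction ha using Algebra.adjoin_induction with
  | mem a ha =>
    intro F hF
    obtain ⟨k, rfl⟩ | ⟨k, rfl⟩ := ha
    · exact ⟨_, hF.symMul k, (wform_symMul k hF.apply_mem_coeffAlgebra).symm⟩
    · have hG := hF.uMul (not_isOfFinOrder_qUnit hq1) k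
      refine ⟨_, hG.smul ((qUnit hq ^ k : ℂˣ) : ℂ)⁻¹, ?_⟩
      rw [wform_smul _ hG.apply_mem_coeffAlgebra, wform_uMul k hF.apply_mem_coeffAlgebra,
        inv_smul_smul₀ (Units.ne_zero _)]
  | algebraMap c =>
    intro F hF
    exact ⟨_, hF.smul c, by
      rw [wform_smul c hF.apply_mem_coeffAlgebra, Algebra.algebraMap_eq_smul_one, smul_one_mul]⟩
  | add a b _ _ iha ihb =>
    intro F hF
    obtain ⟨G, hG, haG⟩ := iha F hF
    obtain ⟨H, hH, hbH⟩ := ihb F hF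
    exact ⟨_, hG.add hH, by
      rw [wform_add hG.apply_mem_coeffAlgebra hH.apply_mem_coeffAlgebra, add_mul, haG, hbH]⟩
  | mul a b _ _ iha ihb =>
    intro F hF
    obtain ⟨G, hG, hbG⟩ := ihb F hF
    obtain ⟨H, hH, haH⟩ := iha G hG
    exact ⟨H, hH, by rw [mul_assoc, hbG, haH]⟩

/-- The families with coefficients in `coeffAlgebra` which represent elements of `𝒜`. -/
def acalFamilies (hq : 0 < q) : Submodule ℂ (ℤ →₀ RatFunc ℂ) where
  carrier := {F | (∀ n, F n ∈ coeffAlgebra (qUnit hq)) ∧ wform hq F ∈ Acal hq}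
  add_mem' hF hG := ⟨fun n => add_mem (hF.1 n) (hG.1 n), by
    rw [wform_add hF.1 hG.1]; exact add_mem hF.2 hG.2⟩
  zero_mem' := ⟨fun _ => zero_mem _, zero_mem _⟩
  smul_mem' c _ hF := ⟨fun n => Subalgebra.smul_mem _ (hF.1 n) c, by
    rw [wform_smul c hF.1]; exact Subalgebra.smul_mem _ hF.2 c⟩

theorem isGeneratorStable_acalFamilies (hq : 0 < q) :
    IsGeneratorStable (qUnit hq) (acalFamilies hq) where
  single_zero_one_mem := ⟨IsAdmissible.single_zero_one.apply_mem_coeffAlgebra, by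
    rw [wform_single_zero_one]; exact one_mem _⟩
  symMul_mem a F hF := ⟨symMul_apply_mem_coeffAlgebra a hF.1, by
    rw [wform_symMul a hF.1]
    exact mul_mem (Algebra.subset_adjoin (.inl ⟨a, rfl⟩)) hF.2⟩
  uMul_mem a F hF := ⟨uMul_apply_mem_coeffAlgebra a hF.1, by
    rw [wform_uMul a hF.1]
    exact Subalgebra.smul_mem _ (mul_mem (Algebra.subset_adjoin (.inr ⟨a, rfl⟩)) hF.2) _⟩

theorem mem_Acal_iff (hq1 : q ≠ 1) {a : Module.End ℂ (Dom q → ℂ)} :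
    a ∈ Acal hq ↔ ∃ F, a = wform hq F ∧ IsAdmissible (qUnit hq) F := by
  constructor
  · intro ha
    obtain ⟨F, hF, haF⟩ := exists_mul_wform_eq hq1 ha _ IsAdmissible.single_zero_one
    rw [wform_single_zero_one, mul_one] at haF
    exact ⟨F, haF, hF⟩
  · rintro ⟨F, rfl, hF⟩
    exact ((isGeneratorStable_acalFamilies hq).admissible_le (not_isOfFinOrder_qUnit hq1) hF).2

end Operators

section Criteria

variable {K : Type*} [Field K] {f g : RatFunc K} {z c r : K}

theorem hasResidueAt_iff_of_denom_eq {e : K[X]} (he : f.denom = (X - C z) * e) :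
    HasResidueAt f z r ↔ e.eval z ≠ 0 ∧ f.num.eval z / e.eval z = r := by
  have hmul : (RatFunc.X - RatFunc.C z) * f =
      algebraMap K[X] (RatFunc K) f.num / algebraMap K[X] (RatFunc K) e := by
    nth_rewrite 1 [← RatFunc.num_div_denom f]
    rw [he, map_mul, map_sub, RatFunc.algebraMap_X, RatFunc.algebraMap_C, mul_div_assoc',
      mul_div_mul_left _ _ (ratFuncX_sub_C_ne_zero z)]
  have hres (hez : e.eval z ≠ 0) : HasResidueAt f z (f.num.eval z / e.eval z) := by
    rw [HasResidueAt, hmul]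
    exact (HasValueAt.algebraMap _ z).div (HasValueAt.algebraMap _ z) hez
  refine ⟨fun hr => ?_, fun ⟨hez, hr⟩ => hr ▸ hres hez⟩
  have hdvd : f.denom ∣ (X - C z) * ((RatFunc.X - RatFunc.C z) * f).denom := by
    rw [RatFunc.denom_dvd (mul_ne_zero (X_sub_C_ne_zero z) (RatFunc.denom_ne_zero _))]
    refine ⟨((RatFunc.X - RatFunc.C z) * f).num, ?_⟩
    rw [map_mul, map_sub, RatFunc.algebraMap_X, RatFunc.algebraMap_C, div_mul_eq_div_div_swap,
      RatFunc.num_div_denom, mul_div_cancel_left₀ _ (ratFuncX_sub_C_ne_zero z)]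
  rw [he, mul_dvd_mul_iff_left (X_sub_C_ne_zero z)] at hdvd
  have hez : e.eval z ≠ 0 := fun h =>
    hr.denom_ne_zero (eval_eq_zero_of_dvd_of_eval_eq_zero hdvd h)
  exact ⟨hez, (hres hez).unique hr⟩

theorem invX_eq_C_mul_iff [Infinite K] :
    invX f = RatFunc.C c * g ↔ ∀ z : K, z ≠ 0 → f.denom.eval z⁻¹ ≠ 0 → g.denom.eval z ≠ 0 →
      f.eval (RingHom.id K) z⁻¹ = c * g.eval (RingHom.id K) z := by
  refine ⟨fun h z hz hf hg => ?_, fun h => ?_⟩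
  · have hinv := HasValueAt.invX hz ⟨hf, rfl⟩
    rw [h] at hinv
    exact hinv.unique ((HasValueAt.C c z).mul ⟨hg, rfl⟩)
  · have hg : {z : K | g.denom.eval z = 0}.Finite :=
      finite_setOfPred_isRoot (RatFunc.denom_ne_zero g)
    have hf : {z : K | f.denom.eval z⁻¹ = 0}.Finite :=
      (finite_setOfPred_isRoot (RatFunc.denom_ne_zero f)).preimage inv_injective.injOn
    refine eq_of_infinite_hasValueAt _ ((hg.union hf).insert 0).infinite_compl fun z hz => ?_
    obtain ⟨hz0, hgz, hfz⟩ : z ≠ 0 ∧ g.denom.eval z ≠ 0 ∧ f.denom.eval z⁻¹ ≠ 0 := by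
      simpa [not_or] using hz
    exact ⟨_, HasValueAt.invX hz0 ⟨hfz, rfl⟩, by
      rw [h z hz0 hfz hgz]; exact (HasValueAt.C c z).mul ⟨hgz, rfl⟩⟩

theorem forall_reflection_iff [NeZero (2 : K)] (ρ : ℤ → K) (i : ℤ) :
    (∀ k : ℤ, ρ (i + k) = (-1) ^ (k + 1) * ρ (i - k)) ↔
      ρ i = 0 ∧ ∀ k : ℕ, 0 < k → ρ (i + k) = (-1) ^ (k + 1) * ρ (i - k) := by
  constructor
  · intro h
    have hneg : ρ i = -ρ i := by simpa using h 0
    rw [eq_neg_iff_add_eq_zero, ← two_mul] at hneg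
    exact ⟨(mul_eq_zero.1 hneg).resolve_left two_ne_zero, fun k _ => by exact_mod_cast h k⟩
  · rintro ⟨h0, hpos⟩ k
    obtain ⟨k, rfl | rfl⟩ := k.eq_nat_or_neg
    all_goals obtain rfl | hk := k.eq_zero_or_pos
    · simp [h0]
    · exact_mod_cast hpos k hk
    · simp [h0]
    · have hsign : (-1 : K) ^ (-(k : ℤ) + 1) * (-1) ^ (k + 1) = 1 := by
        rw [← zpow_natCast, ← zpow_add₀ (by simp), Nat.cast_succ,
          show -(k : ℤ) + 1 + (k + 1) = 2 * 1 by ring, zpow_mul]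
        simp
      rw [sub_neg_eq_add, hpos k hk, ← mul_assoc, hsign, one_mul, ← sub_eq_add_neg]

end Criteria

section Characterisation

variable {q : ℝ} {hq : 0 < q} {f g : RatFunc ℂ} {F : ℤ →₀ RatFunc ℂ} {z c r : ℂ}

theorem hasResidueAt_iff_residueAt : HasResidueAt f z r ↔
    (f.denom.eval z = 0 → f.denom.rootMultiplicity z = 1) ∧ residueAt f z = r := by
  by_cases hpole : f.denom.eval z = 0
  · obtain ⟨e, he⟩ := dvd_iff_isRoot.2 hpole
    have hderiv : (derivative f.denom).eval z = e.eval z := by simp [he, derivative_mul]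
    have hmult : f.denom.rootMultiplicity z = 1 ↔ e.eval z ≠ 0 := by
      have he0 : (X - C z) * e ≠ 0 := he ▸ RatFunc.denom_ne_zero f
      rw [he, rootMultiplicity_mul he0, rootMultiplicity_X_sub_C_self, Nat.add_eq_left,
        rootMultiplicity_eq_zero_iff]
      simp [right_ne_zero_of_mul he0]
    rw [hasResidueAt_iff_of_denom_eq he, residueAt, if_pos hpole, hderiv, hmult,
      imp_iff_right hpole]
  · have hzero : HasResidueAt f z 0 := HasValueAt.hasResidueAt_zero ⟨hpole, rfl⟩
    rw [residueAt, if_neg hpole]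
    exact ⟨fun hr => ⟨fun h => absurd h hpole, hzero.unique hr⟩, fun hr => hr.2 ▸ hzero⟩

theorem HasResidueAt.residueAt_eq (hr : HasResidueAt f z r) : residueAt f z = r :=
  (hasResidueAt_iff_residueAt.1 hr).2

theorem exists_hasResidueAt_iff_residueAt_eq (hf : ∃ r, HasResidueAt f z r)
    (hg : ∃ r, HasResidueAt g z r) : (∃ r, HasResidueAt f z r ∧ HasResidueAt g z (c * r)) ↔
      residueAt g z = c * residueAt f z := by
  obtain ⟨r, hr⟩ := hf
  obtain ⟨s, hs⟩ := hg
  rw [hs.residueAt_eq, hr.residueAt_eq]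
  exact ⟨fun ⟨t, ht, ht'⟩ => by rw [hs.unique ht', hr.unique ht], fun h => ⟨r, hr, h ▸ hs⟩⟩

theorem okPoles_iff : OkPoles q f ↔ f ∈ coeffAlgebra (qUnit hq) ∧
    ∀ (z : ℂˣ) (j : ℤ), z ^ 2 = qUnit hq ^ (2 * j) → ∃ r, HasResidueAt f z r := by
  constructor
  · refine fun h => ⟨mem_coeffAlgebra_iff.2 fun z hz hpole => ?_, fun z j _ =>
      ⟨_, hasResidueAt_iff_residueAt.2 ⟨fun hpole => (h z z.ne_zero hpole).1, rfl⟩⟩⟩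
    obtain ⟨j, hj⟩ := (h z z.ne_zero hpole).2
    exact hz j (sq_eq_qUnit_zpow_iff.2 hj)
  · rintro ⟨hreg, hres⟩ z hz hpole
    lift z to ℂˣ using hz.isUnit
    obtain ⟨j, hj⟩ : ∃ j : ℤ, z ^ 2 = qUnit hq ^ (2 * j) := by
      by_contra! h
      exact mem_coeffAlgebra_iff.1 hreg z h hpole
    obtain ⟨r, hr⟩ := hres z j hj
    exact ⟨(hasResidueAt_iff_residueAt.1 hr).1 hpole, j, sq_eq_qUnit_zpow_iff.1 hj⟩

theorem forall_sq_eq_qUnit_zpow_iff {p : ℂ → Prop} {i : ℤ} :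
    (∀ z : ℂˣ, z ^ 2 = qUnit hq ^ (2 * i) → p z) ↔ p ((q : ℂ) ^ i) ∧ p (-(q : ℂ) ^ i) := by
  have hval : ((qUnit hq ^ i : ℂˣ) : ℂ) = (q : ℂ) ^ i := by simp [qUnit]
  refine ⟨fun h => ⟨?_, ?_⟩, fun h z hz => ?_⟩
  · simpa only [hval] using h (qUnit hq ^ i) (sq_eq_qUnit_zpow_iff.2 (.inl hval))
  · simpa only [Units.val_neg, hval] using
      h (-qUnit hq ^ i) (sq_eq_qUnit_zpow_iff.2 (.inr (by rw [Units.val_neg, hval])))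
  · obtain hz | hz := sq_eq_qUnit_zpow_iff.1 hz
    exacts [hz ▸ h.1, hz ▸ h.2]

theorem isAdmissible_iff_residueAt : IsAdmissible (qUnit hq) F ↔
    (∀ i, OkPoles q (F i)) ∧ (∀ i, invX (F (-i)) = (-1) ^ i * F i) ∧
      ∀ (i : ℤ) (z : ℂˣ), z ^ 2 = qUnit hq ^ (2 * i) → ∀ k : ℤ,
        residueAt (F (i + k)) z = (-1) ^ (k + 1) * residueAt (F (i - k)) z := by
  constructor
  · intro hF
    have hres (n : ℤ) (z : ℂˣ) (j : ℤ) (hz : z ^ 2 = qUnit hq ^ (2 * j)) :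
        ∃ r, HasResidueAt (F n) z r := by
      obtain ⟨_, -, hr⟩ := hF.exists_hasResidueAt z j (n - j) hz
      rw [add_sub_cancel] at hr
      exact ⟨_, hr⟩
    exact ⟨fun n => okPoles_iff.2 ⟨hF.apply_mem_coeffAlgebra n, hres n⟩, hF.invX_apply_neg,
      fun i z hz k => (exists_hasResidueAt_iff_residueAt_eq (hres _ z i hz) (hres _ z i hz)).1
        (hF.exists_hasResidueAt z i k hz)⟩
  · rintro ⟨hpoles, hinv, hres⟩
    exact ⟨fun n => (okPoles_iff.1 (hpoles n)).1, hinv, fun z i k hz =>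
      (exists_hasResidueAt_iff_residueAt_eq ((okPoles_iff.1 (hpoles _)).2 z i hz)
        ((okPoles_iff.1 (hpoles _)).2 z i hz)).2 (hres i z hz k)⟩

theorem invX_eq_neg_one_zpow_mul_iff (n : ℤ) : invX f = (-1) ^ n * g ↔
    ∀ z : ℂ, z ≠ 0 → f.denom.eval z⁻¹ ≠ 0 → g.denom.eval z ≠ 0 →
      f.eval (RingHom.id ℂ) z⁻¹ = (-1) ^ n * g.eval (RingHom.id ℂ) z := by
  rw [← invX_eq_C_mul_iff, map_zpow₀, map_neg, map_one]

theorem forall_residueAt_iff :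
    (∀ (i : ℤ) (z : ℂˣ), z ^ 2 = qUnit hq ^ (2 * i) → ∀ k : ℤ,
      residueAt (F (i + k)) z = (-1) ^ (k + 1) * residueAt (F (i - k)) z) ↔
    (∀ i : ℤ, residueAt (F i) ((q : ℂ) ^ i) = 0 ∧ residueAt (F i) (-(q : ℂ) ^ i) = 0) ∧
      ∀ (i : ℤ) (k : ℕ), 0 < k →
        residueAt (F (i + k)) ((q : ℂ) ^ i) =
          (-1 : ℂ) ^ (k + 1) * residueAt (F (i - k)) ((q : ℂ) ^ i) ∧
        residueAt (F (i + k)) (-(q : ℂ) ^ i) =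
          (-1 : ℂ) ^ (k + 1) * residueAt (F (i - k)) (-(q : ℂ) ^ i) := by
  rw [← forall_and]
  refine forall_congr' fun i => ?_
  have hreflection (z : ℂˣ) := forall_reflection_iff (fun n => residueAt (F n) z) i
  simp only [hreflection]
  rw [forall_sq_eq_qUnit_zpow_iff
    (p := fun z => residueAt (F i) z = 0 ∧ ∀ k : ℕ, 0 < k →
      residueAt (F (i + k)) z = (-1) ^ (k + 1) * residueAt (F (i - k)) z),
    and_and_and_comm]
  simp only [imp_and, forall_and]

end Characterisation

theorem statement13_general (q : ℝ) (hq : 0 < q) (hq1 : q ≠ 1) :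
    (Acal hq : Set (Module.End ℂ (Dom q → ℂ))) =
      {a | ∃ F : ℤ →₀ RatFunc ℂ, a = wform hq F ∧
        (∀ i : ℤ, OkPoles q (F i)) ∧
        (∀ (i : ℤ) (z : ℂ), z ≠ 0 →
          (F (-i)).denom.eval z⁻¹ ≠ 0 → (F i).denom.eval z ≠ 0 →
          (F (-i)).eval (RingHom.id ℂ) z⁻¹ = (-1 : ℂ) ^ i * (F i).eval (RingHom.id ℂ) z) ∧
        (∀ i : ℤ, residueAt (F i) ((q : ℂ) ^ i) = 0 ∧
          residueAt (F i) (-(q : ℂ) ^ i) = 0) ∧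
        (∀ (i : ℤ) (k : ℕ), 0 < k →
          residueAt (F (i + k)) ((q : ℂ) ^ i) =
            (-1 : ℂ) ^ (k + 1) * residueAt (F (i - k)) ((q : ℂ) ^ i) ∧
          residueAt (F (i + k)) (-(q : ℂ) ^ i) =
            (-1 : ℂ) ^ (k + 1) * residueAt (F (i - k)) (-(q : ℂ) ^ i))} := by
  ext a
  rw [SetLike.mem_coe, mem_Acal_iff hq1, Set.mem_ofPred_eq]
  refine exists_congr fun F => and_congr_right fun _ => ?_
  rw [isAdmissible_iff_residueAt, forall_residueAt_iff]
  simp only [invX_eq_neg_one_zpow_mul_iff]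

/-- `𝒜` coincides with the set of elements `a = Σ_i w^i f_i` of `W` whose
coefficients have only simple poles, only possibly at `±q^j`, with
(1) `f_{−i}(v⁻¹) = (−1)^i f_i(v)`, (2) `f_i^{(i,±)} = 0`, and
(3) `f_{i+k}^{(i,±)} = (−1)^{k+1} f_{i−k}^{(i,±)}` for every positive integer `k`. -/
theorem statement13 (q : ℝ) (hq : 0 < q) (hq1 : q < 1) :
    (Acal hq : Set (Module.End ℂ (Dom q → ℂ))) =
      {a | ∃ F : ℤ →₀ RatFunc ℂ, a = wform hq F ∧
        (∀ i : ℤ, OkPoles q (F i)) ∧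
        (∀ (i : ℤ) (z : ℂ), z ≠ 0 →
          (F (-i)).denom.eval z⁻¹ ≠ 0 → (F i).denom.eval z ≠ 0 →
          (F (-i)).eval (RingHom.id ℂ) z⁻¹ = (-1 : ℂ) ^ i * (F i).eval (RingHom.id ℂ) z) ∧
        (∀ i : ℤ, residueAt (F i) ((q : ℂ) ^ i) = 0 ∧
          residueAt (F i) (-(q : ℂ) ^ i) = 0) ∧
        (∀ (i : ℤ) (k : ℕ), 0 < k →
          residueAt (F (i + k)) ((q : ℂ) ^ i) =
            (-1 : ℂ) ^ (k + 1) * residueAt (F (i - k)) ((q : ℂ) ^ i) ∧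
          residueAt (F (i + k)) (-(q : ℂ) ^ i) =
            (-1 : ℂ) ^ (k + 1) * residueAt (F (i - k)) (-(q : ℂ) ^ i))} := by
  exact statement13_general q hq hq1.ne
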